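/- For every integer k ≥ 3, the permutation gate U_k on n = 2ᵏ−1 qubits lies in 𝒞₃, but its inverse U_k⁻¹ does not lie in 𝒞ₖ. Consequently U_k is not semi-Clifford. -/

import Mathlib

/-! Common framework: qubit gates, the Pauli group, the Clifford hierarchy,
permutation gates, Toffoli gates and staircase form, descending multiplications,
multilinear polynomial representations. -/

/-- Vectors in `𝔽₂ⁿ`, indexing computational basis states. -/
abbrev QV (n : ℕ) := Fin n → ZMod 2

/-- `n`-qubit gates: `2ⁿ × 2ⁿ` complex matrices indexed by `𝔽₂ⁿ`. -/
abbrev QMat (n : ℕ) := Matrix (QV n) (QV n) ℂ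

/-- Standard basis vector `eᵢ` of `𝔽₂ⁿ`. -/
def stdBasis (n : ℕ) (i : Fin n) : QV n := fun m => if m = i then 1 else 0

/-- The gate `X^u Z^z`, sending `|b⟩` to `(-1)^(z·b) |b+u⟩`. -/
noncomputable def XZGate (n : ℕ) (u z : QV n) : QMat n :=
  fun a b => if a = b + u then (-1 : ℂ) ^ (∑ i, (z i).val * (b i).val) else 0

/-- The Pauli group on `n` qubits: gates `c·P₁⊗⋯⊗Pₙ`, `c ∈ {±1, ±i}`,
`Pᵢ ∈ {I,X,Y,Z}`, equivalently phases times `X^u Z^z`. -/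
def PauliGroup (n : ℕ) : Set (QMat n) :=
  { P | ∃ (c : ℂ) (u z : QV n),
      (c = 1 ∨ c = -1 ∨ c = Complex.I ∨ c = -Complex.I) ∧ P = c • XZGate n u z }

/-- Level `k` of the Clifford hierarchy `𝒞ₖ` (level 1 is the Pauli group,
level 2 the Clifford group; level 0 is junk/empty). -/
def CliffordLevel (n : ℕ) : ℕ → Set (QMat n)
  | 0 => ∅
  | 1 => PauliGroup n
  | (k+2) => { U | U ∈ Matrix.unitaryGroup (QV n) ℂ ∧
      ∀ P ∈ PauliGroup n, U * P * star U ∈ CliffordLevel n (k+1) }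

/-- The permutation gate of a permutation `f` of `𝔽₂ⁿ`: sends `|v⟩` to `|f v⟩`. -/
noncomputable def permGate (n : ℕ) (f : QV n ≃ QV n) : QMat n :=
  fun a b => if a = f b then 1 else 0

/-- A diagonal gate. -/
def IsDiagonal (n : ℕ) (d : QMat n) : Prop := ∀ a b : QV n, a ≠ b → d a b = 0

/-- A gate is semi-Clifford if it equals `φ₁ d φ₂` for Clifford `φ₁, φ₂` and diagonal `d`. -/
def IsSemiClifford (n : ℕ) (U : QMat n) : Prop :=
  ∃ φ₁ d φ₂ : QMat n, φ₁ ∈ CliffordLevel n 2 ∧ φ₂ ∈ CliffordLevel n 2 ∧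
    IsDiagonal n d ∧ U = φ₁ * d * φ₂

/-- The underlying map of the Toffoli gate `TOF_{i,j,k}`: `v ↦ v + (vᵢvⱼ)·eₖ`. -/
def tofFun (n : ℕ) (i j k : Fin n) (v : QV n) : QV n :=
  fun m => if m = k then v m + v i * v j else v m

/-- A map on `𝔽₂ⁿ` is in staircase form if it is a product (applied left-to-right)
of pairwise distinct Toffoli gates `TOF_{i,j,k}` with `i<j<k` and with targets
nondecreasing in the order the gates are applied. -/
def IsStaircase (n : ℕ) (g : QV n → QV n) : Prop :=
  ∃ L : List (Fin n × Fin n × Fin n),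
    L.Nodup ∧
    (∀ t ∈ L, t.1 < t.2.1 ∧ t.2.1 < t.2.2) ∧
    List.Chain' (fun s t => s.2.2 ≤ t.2.2) L ∧
    g = fun v => L.foldl (fun w t => tofFun n t.1 t.2.1 t.2.2 w) v

/-- A descending multiplication on `𝔽₂ⁿ`: bilinear, associative, commutative,
`eᵢeᵢ = 0`, and for `i < j`, `eᵢeⱼ ∈ span{eₖ : k > j}`. -/
def IsDescendingMul (n : ℕ) (mul : QV n → QV n → QV n) : Prop :=
  (∀ u v w : QV n, mul (u + v) w = mul u w + mul v w) ∧
  (∀ u v w : QV n, mul u (v + w) = mul u v + mul u w) ∧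
  (∀ u v w : QV n, mul (mul u v) w = mul u (mul v w)) ∧
  (∀ u v : QV n, mul u v = mul v u) ∧
  (∀ i : Fin n, mul (stdBasis n i) (stdBasis n i) = 0) ∧
  (∀ i j : Fin n, i < j → ∀ m : Fin n, m ≤ j → mul (stdBasis n i) (stdBasis n j) m = 0)

/-- The product `∏_{i ∈ l} eᵢ` under a multiplication, for a list `l` (junk `0` on `[]`). -/
def dmProdList (n : ℕ) (mul : QV n → QV n → QV n) : List (Fin n) → QV n
  | [] => 0
  | [i] => stdBasis n i
  | i :: j :: rest => mul (stdBasis n i) (dmProdList n mul (j :: rest))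

/-- The product `∏_{i ∈ T} eᵢ` under a multiplication. -/
def dmProd (n : ℕ) (mul : QV n → QV n → QV n) (T : Finset (Fin n)) : QV n :=
  dmProdList n mul (T.sort (· ≤ ·))

/-- `g` is the map `∑_{i∈S} eᵢ ↦ ∑_{∅≠T⊆S} ∏_{i∈T} eᵢ` associated to a multiplication. -/
def dmPiSpec (n : ℕ) (mul : QV n → QV n → QV n) (g : QV n → QV n) : Prop :=
  ∀ S : Finset (Fin n),
    g (∑ i ∈ S, stdBasis n i) = ∑ T ∈ S.powerset.erase ∅, dmProd n mul T

/-- The bilinear extension of `eᵢeⱼ := g(eᵢ+eⱼ) + eᵢ + eⱼ`. -/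
def inducedMul (n : ℕ) (g : QV n → QV n) (u v : QV n) : QV n :=
  ∑ i : Fin n, ∑ j : Fin n,
    (u i * v j) • (g (stdBasis n i + stdBasis n j) + stdBasis n i + stdBasis n j)

/-- Coefficient of the monomial `∏_{i∈T} aᵢ` in the unique multilinear polynomial
over `𝔽₂` representing `g : 𝔽₂ⁿ → 𝔽₂` (Möbius inversion over `𝔽₂`). -/
def mlCoeff (n : ℕ) (g : QV n → ZMod 2) (T : Finset (Fin n)) : ZMod 2 :=
  ∑ R ∈ T.powerset, g (∑ i ∈ R, stdBasis n i)

/-- Strictly lower triangular matrix. -/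
def StrictLowerTri (n : ℕ) (A : Matrix (Fin n) (Fin n) (ZMod 2)) : Prop :=
  ∀ p q : Fin n, p ≤ q → A p q = 0

/-- Multiplication of basis vectors for the gate `U_k`: the basis of `𝔽₂^(2^k-1)` is
indexed by nonempty subsets `S ⊆ [k]`, encoded as indices `a` via the binary digits of
`a+1`; `e_S e_T = e_{S∪T}` if `S ∩ T = ∅` and `e_S e_T = 0` otherwise. -/
def ukBasisMul (k : ℕ) (a b : Fin (2 ^ k - 1)) : QV (2 ^ k - 1) :=
  if (a.val + 1) &&& (b.val + 1) = 0 then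
    (if h : a.val + b.val + 1 < 2 ^ k - 1 then stdBasis (2 ^ k - 1) ⟨a.val + b.val + 1, h⟩
     else 0)
  else 0

/-- The descending multiplication defining `U_k`, extended bilinearly. -/
def ukMul (k : ℕ) (u v : QV (2 ^ k - 1)) : QV (2 ^ k - 1) :=
  ∑ a : Fin (2 ^ k - 1), ∑ b : Fin (2 ^ k - 1), (u a * v b) • ukBasisMul k a b

/-!
For a descending multiplication, `1 + U(∑ aᵢ eᵢ) = ∏ (1 + aᵢ eᵢ)` in the algebra with a unit
adjoined, so `U` turns the sum `u + v` into `U u + U v + U u * U v`. Hence `U` conjugates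
translations to affine maps, and `U⁻¹` is quadratic because `v * v = 0`; together these put the
gate of `U` in `𝒞₃`.

If the inverse gate lies in `𝒞_d`, then conjugating the `Z` gates by it gives diagonal gates in
`𝒞_(d-1)` whose phase functions are the coordinates of `U`. Each conjugation of an `X` gate by a
diagonal gate differentiates the phase function, so `U` has degree less than `d`. But the iterated
finite differences of `U` produce products in the algebra, and `e_{1} * ⋯ * e_{k} = e_[k]` is
nonzero, so `U_k` has degree at least `k`.

Finally, the inverse of a diagonal unitary is its entrywise conjugate, and entrywise conjugation
preserves every level of the hierarchy. A semi-Clifford gate in `𝒞_j` therefore has its inverse in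
`𝒞_j`; for `U_k` and `j = 3` this is excluded by the degree bound.
-/

section PolynomialMaps

open scoped fwdDiff

/-- Maps from a commutative monoid to an abelian group that are polynomial of degree `< d`, in the
sense that all their `d`-fold finite differences vanish. For functions on `𝔽₂ⁿ` this is the degree
of the representing multilinear polynomial; degree `< 2` means affine. -/
def HasDegreeLT {M G : Type*} [AddCommMonoid M] [AddCommGroup G] : ℕ → (M → G) → Prop
  | 0, f => f = 0
  | d + 1, f => ∀ s, HasDegreeLT d (Δ_[s] f)

variable {M G H : Type*} [AddCommMonoid M] [AddCommGroup G] [AddCommGroup H] {d : ℕ}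

theorem hasDegreeLT_two_iff {f : M → G} :
    HasDegreeLT 2 f ↔ ∀ x y, f (x + y) = f x + f y - f 0 := by
  simp only [HasDegreeLT, funext_iff, fwdDiff, Pi.zero_apply, sub_eq_zero]
  constructor
  · intro h x y
    have hxy := h x y 0
    rw [zero_add, zero_add, sub_eq_iff_eq_add, add_comm y] at hxy
    rw [hxy]
    abel
  · intro h s t x
    rw [h (x + t) s, h x s]
    abel

theorem HasDegreeLT.add {f g : M → G} (hf : HasDegreeLT d f) (hg : HasDegreeLT d g) :
    HasDegreeLT d (f + g) := by
  induction d generalizing f g with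
  | zero => rw [show f = 0 from hf, show g = 0 from hg, add_zero]; rfl
  | succ d ih => exact fun s => fwdDiff_add s f g ▸ ih (hf s) (hg s)

theorem HasDegreeLT.comp_affine {f : G → H} {g : M → G} (hf : HasDegreeLT d f)
    (hg : HasDegreeLT 2 g) : HasDegreeLT d (f ∘ g) := by
  induction d generalizing f with
  | zero => rw [show f = 0 from hf]; rfl
  | succ d ih =>
    intro s
    have hdiff : Δ_[s] (f ∘ g) = Δ_[g s - g 0] f ∘ g := by
      funext x
      simp only [fwdDiff, Function.comp_apply, hasDegreeLT_two_iff.1 hg x s, add_sub_assoc]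
    rw [hdiff]
    exact ih (hf _)

theorem HasDegreeLT.addMonoidHom_comp {f : M → G} (φ : G →+ H) (hf : HasDegreeLT d f) :
    HasDegreeLT d (φ ∘ f) := by
  induction d generalizing f with
  | zero => rw [show f = 0 from hf]; exact funext fun _ => map_zero φ
  | succ d ih =>
    intro s
    have hdiff : Δ_[s] (φ ∘ f) = φ ∘ Δ_[s] f := funext fun x => (map_sub φ _ _).symm
    rw [hdiff]
    exact ih (hf s)

theorem HasDegreeLT.exists_addMonoidHom {f : M → G} (hf : HasDegreeLT 2 f) :
    ∃ φ : M →+ G, ∀ x y, f (x + y) = f x + φ y :=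
  ⟨AddMonoidHom.mk' (fun x => f x - f 0) fun x y => by rw [hasDegreeLT_two_iff.1 hf]; abel,
    fun x y => by rw [hasDegreeLT_two_iff.1 hf, add_sub_assoc]; rfl⟩

theorem HasDegreeLT.affine_comp {f : G → H} {g : M → G} (hf : HasDegreeLT 2 f)
    (hg : HasDegreeLT (d + 1) g) : HasDegreeLT (d + 1) (f ∘ g) := by
  obtain ⟨φ, hφ⟩ := hf.exists_addMonoidHom
  intro s
  have hdiff : Δ_[s] (f ∘ g) = φ ∘ Δ_[s] g := by
    funext x
    simpa [fwdDiff, sub_eq_iff_eq_add'] using hφ (g x) (g (x + s) - g x)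
  rw [hdiff]
  exact (hg s).addMonoidHom_comp φ

theorem HasDegreeLT.symm {e : G ≃ H} (he : HasDegreeLT 2 e) : HasDegreeLT 2 e.symm := by
  obtain ⟨φ, hφ⟩ := he.exists_addMonoidHom
  refine hasDegreeLT_two_iff.2 fun x y => ?_
  have hy := hφ (e.symm 0) (e.symm y - e.symm 0)
  rw [add_sub_cancel, e.apply_symm_apply, e.apply_symm_apply, zero_add] at hy
  rw [e.symm_apply_eq, add_sub_assoc, hφ, ← hy, e.apply_symm_apply]

theorem HasDegreeLT.pi {ι : Type*} {f : M → ι → G} (hf : ∀ i, HasDegreeLT d fun x => f x i) :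
    HasDegreeLT d f := by
  induction d generalizing f with
  | zero => exact funext fun x => funext fun i => congrFun (hf i) x
  | succ d ih => exact fun s => ih fun i => hf i s

theorem hasDegreeLT_two_addMonoidHom (φ : M →+ G) : HasDegreeLT 2 φ :=
  hasDegreeLT_two_iff.2 fun x y => by rw [map_add, map_zero, sub_zero]

end PolynomialMaps

section SignedPermutations

theorem zmod_two_eq_zero_or_one (x : ZMod 2) : x = 0 ∨ x = 1 := Fin.exists_fin_two.1 ⟨x, rfl⟩

/-- The sign character `x ↦ (-1)ˣ` of `𝔽₂`. -/
noncomputable def signChar : AddChar (ZMod 2) ℂ := AddChar.zmodChar 2 (ζ := -1) (by norm_num)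

theorem signChar_natCast (m : ℕ) : signChar m = (-1) ^ m := AddChar.zmodChar_apply' _ m

theorem signChar_eq_one_or_neg_one (x : ZMod 2) : signChar x = 1 ∨ signChar x = -1 := by
  rw [← ZMod.natCast_zmod_val x, signChar_natCast]
  exact neg_one_pow_eq_or ℂ _

theorem star_signChar (x : ZMod 2) : star (signChar x) = signChar x := by
  rcases signChar_eq_one_or_neg_one x with h | h <;> simp [h]

theorem signChar_pow_four (x : ZMod 2) : signChar x ^ 4 = 1 := by
  rcases signChar_eq_one_or_neg_one x with h | h <;> norm_num [h]

theorem signChar_ne_zero (x : ZMod 2) : signChar x ≠ 0 := by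
  rcases signChar_eq_one_or_neg_one x with h | h <;> norm_num [h]

theorem signChar_injective : Function.Injective signChar := by
  have h0 : signChar 0 = 1 := signChar.map_zero_eq_one
  have h1 : signChar 1 = -1 := by simpa using signChar_natCast 1
  have hne : signChar 1 ≠ signChar 0 := by norm_num [h0, h1]
  intro x y hxy
  rcases zmod_two_eq_zero_or_one x with rfl | rfl <;>
    rcases zmod_two_eq_zero_or_one y with rfl | rfl
  · rfl
  · exact absurd hxy.symm hne
  · exact absurd hxy hne
  · rfl

variable {α : Type*} [DecidableEq α]

/-- The signed permutation matrix `|b⟩ ↦ (-1)^(q (π b)) |π b⟩`: the permutation `π` followed by the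
diagonal gate with phase function `q`. -/
noncomputable def signedPerm (π : Equiv.Perm α) (q : α → ZMod 2) : Matrix α α ℂ :=
  Matrix.of fun a b => if a = π b then signChar (q a) else 0

theorem signedPerm_one_zero : signedPerm (1 : Equiv.Perm α) 0 = 1 := by
  ext a b
  simp [signedPerm, Matrix.one_apply]

theorem star_signedPerm (π : Equiv.Perm α) (q : α → ZMod 2) :
    star (signedPerm π q) = signedPerm π⁻¹ (q ∘ π) := by
  ext a b
  have hiff : a = π⁻¹ b ↔ b = π a := Equiv.Perm.eq_inv_iff_eq.trans eq_comm
  by_cases h : b = π a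
  · simp [signedPerm, Matrix.star_apply, h, star_signChar]
  · simp only [signedPerm, Matrix.star_apply, Matrix.of_apply, if_neg h, if_neg (hiff.not.2 h),
      star_zero]

theorem signChar_smul_signedPerm (x : ZMod 2) (π : Equiv.Perm α) (q : α → ZMod 2) :
    signChar x • signedPerm π q = signedPerm π fun a => x + q a := by
  ext a b
  simp [signedPerm, AddChar.map_add_eq_mul]

variable [Fintype α]

theorem signedPerm_mul (π ρ : Equiv.Perm α) (q r : α → ZMod 2) :
    signedPerm π q * signedPerm ρ r = signedPerm (π * ρ) fun a => q a + r (π⁻¹ a) := by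
  ext a b
  rw [Matrix.mul_apply, Finset.sum_eq_single (ρ b)]
  · by_cases h : a = π (ρ b) <;> simp [signedPerm, h, AddChar.map_add_eq_mul]
  · intro c _ hc
    simp [signedPerm, hc]
  · simp

theorem signedPerm_conj (π ρ : Equiv.Perm α) (q r : α → ZMod 2) :
    signedPerm π q * signedPerm ρ r * star (signedPerm π q) =
      signedPerm (π * ρ * π⁻¹) fun a => q a + r (π⁻¹ a) + q ((π * ρ * π⁻¹)⁻¹ a) := by
  rw [star_signedPerm, signedPerm_mul, signedPerm_mul]
  simp [mul_assoc]

theorem signedPerm_mem_unitaryGroup (π : Equiv.Perm α) (q : α → ZMod 2) :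
    signedPerm π q ∈ Matrix.unitaryGroup α ℂ := by
  rw [Matrix.mem_unitaryGroup_iff, star_signedPerm, signedPerm_mul, ← signedPerm_one_zero]
  congr 1
  · exact mul_inv_cancel π
  · funext a
    simp [CharTwo.add_self_eq_zero]

theorem permGate_eq_signedPerm (n : ℕ) (f : QV n ≃ QV n) : permGate n f = signedPerm f 0 := by
  ext a b
  simp [permGate, signedPerm]

theorem star_permGate (n : ℕ) (f : Equiv.Perm (QV n)) : star (permGate n f) = permGate n f⁻¹ := by
  rw [permGate_eq_signedPerm, permGate_eq_signedPerm, star_signedPerm]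
  rfl

theorem inv_permGate (n : ℕ) (f : Equiv.Perm (QV n)) : (permGate n f)⁻¹ = star (permGate n f) := by
  rw [permGate_eq_signedPerm]
  exact Matrix.inv_eq_right_inv
    (Matrix.mem_unitaryGroup_iff.1 (signedPerm_mem_unitaryGroup f 0))

end SignedPermutations

section PauliGroup

variable {n : ℕ}

theorem phase_iff_pow_four_eq_one (c : ℂ) :
    (c = 1 ∨ c = -1 ∨ c = Complex.I ∨ c = -Complex.I) ↔ c ^ 4 = 1 := by
  have hfactor : c ^ 4 - 1 = (c - 1) * (c + 1) * (c - Complex.I) * (c + Complex.I) := by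
    linear_combination (c ^ 2 - 1) * Complex.I_sq
  rw [← sub_eq_zero (a := c ^ 4), hfactor]
  simp [sub_eq_zero, add_eq_zero_iff_eq_neg, or_assoc]

theorem mul_star_eq_one_of_pow_four {c : ℂ} (hc : c ^ 4 = 1) : c * star c = 1 := by
  have hnorm : ‖c‖ = 1 := Complex.norm_eq_one_of_pow_eq_one hc (by norm_num)
  simpa [hnorm] using Complex.mul_conj' c

theorem XZGate_eq_signedPerm (u z : QV n) :
    XZGate n u z = signedPerm (Equiv.addRight u) fun a => z ⬝ᵥ (a - u) := by
  ext a b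
  by_cases h : a = b + u
  · simp [XZGate, signedPerm, h, dotProduct, ← signChar_natCast]
  · simp [XZGate, signedPerm, h]

theorem HasDegreeLT.exists_dotProduct {q : QV n → ZMod 2} (hq : HasDegreeLT 2 q) :
    ∃ z : QV n, ∀ x y, q (x + y) = q x + z ⬝ᵥ y := by
  obtain ⟨φ, hφ⟩ := hq.exists_addMonoidHom
  refine ⟨(dotProductEquiv (ZMod 2) (Fin n)).symm (φ.toZModLinearMap 2), fun x y => ?_⟩
  rw [hφ, ← dotProductEquiv_apply_apply, LinearEquiv.apply_symm_apply]
  rfl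

theorem mem_pauliGroup_iff {P : QMat n} :
    P ∈ PauliGroup n ↔ ∃ (c : ℂ) (u : QV n) (q : QV n → ZMod 2),
      c ^ 4 = 1 ∧ HasDegreeLT 2 q ∧ P = c • signedPerm (Equiv.addRight u) q := by
  constructor
  · rintro ⟨c, u, z, hc, rfl⟩
    refine ⟨c, u, _, (phase_iff_pow_four_eq_one c).1 hc, ?_, by rw [XZGate_eq_signedPerm]⟩
    refine hasDegreeLT_two_iff.2 fun x y => ?_
    simp only [dotProduct_sub, dotProduct_add, dotProduct_zero]
    ring
  · rintro ⟨c, u, q, hc, hq, rfl⟩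
    obtain ⟨z, hz⟩ := hq.exists_dotProduct
    refine ⟨c * signChar (q u), u, z, ?_, ?_⟩
    · rw [phase_iff_pow_four_eq_one, mul_pow, hc, signChar_pow_four, one_mul]
    · rw [mul_smul, XZGate_eq_signedPerm, signChar_smul_signedPerm]
      simp only [← hz, add_sub_cancel]

theorem signedPerm_addRight_mem_pauliGroup (u : QV n) {q : QV n → ZMod 2} (hq : HasDegreeLT 2 q) :
    signedPerm (Equiv.addRight u) q ∈ PauliGroup n :=
  mem_pauliGroup_iff.2 ⟨1, u, q, one_pow 4, hq, (one_smul ℂ _).symm⟩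

theorem finite_pauliGroup (n : ℕ) : (PauliGroup n).Finite := by
  let phases : Set ℂ := {1, -1, Complex.I, -Complex.I}
  refine (Set.toFinite ((fun p : ℂ × QV n × QV n => p.1 • XZGate n p.2.1 p.2.2) ''
    phases ×ˢ Set.univ)).subset ?_
  rintro P ⟨c, u, z, hc, rfl⟩
  exact ⟨(c, u, z), ⟨by simpa [phases] using hc, Set.mem_univ _⟩, rfl⟩

end PauliGroup

section CliffordHierarchy

variable {n j : ℕ} {U φ : QMat n}

theorem smul_mem_cliffordLevel {c : ℂ} (hc : c ^ 4 = 1) (hU : U ∈ CliffordLevel n (j + 1)) :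
    c • U ∈ CliffordLevel n (j + 1) := by
  have hcc := mul_star_eq_one_of_pow_four hc
  match j with
  | 0 =>
    obtain ⟨c', u, q, hc', hq, rfl⟩ := mem_pauliGroup_iff.1 hU
    exact mem_pauliGroup_iff.2 ⟨c * c', u, q, by rw [mul_pow, hc, hc', one_mul], hq, smul_smul ..⟩
  | j + 1 =>
    refine ⟨?_, fun P hP => ?_⟩
    · rw [Matrix.mem_unitaryGroup_iff, star_smul, smul_mul_smul_comm, hcc, one_smul]
      exact Matrix.mem_unitaryGroup_iff.1 hU.1
    · rw [star_smul, smul_mul_assoc, smul_mul_smul_comm, hcc, one_smul]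
      exact hU.2 P hP

/-- Conjugation by a Clifford gate is an injection of the finite Pauli group into itself, hence
onto. -/
theorem star_mul_mul_mem_pauliGroup (hφ : φ ∈ CliffordLevel n 2) {P : QMat n}
    (hP : P ∈ PauliGroup n) : star φ * P * φ ∈ PauliGroup n := by
  have hφφ : star φ * φ = 1 := Matrix.mem_unitaryGroup_iff'.1 hφ.1
  have hcancel (Q : QMat n) : star φ * (φ * Q * star φ) * φ = Q := by
    simp only [mul_assoc, hφφ, mul_one]
    rw [← mul_assoc, hφφ, one_mul]
  have hinj : Set.InjOn (fun Q => φ * Q * star φ) (PauliGroup n) := fun Q _ R _ hQR => by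
    rw [← hcancel Q, ← hcancel R]
    exact congrArg (fun T => star φ * T * φ) hQR
  obtain ⟨Q, hQ, rfl⟩ :=
    (((finite_pauliGroup n).injOn_iff_bijOn_of_mapsTo hφ.2).1 hinj).surjOn hP
  rwa [hcancel]

theorem star_mem_cliffordLevel_two (hφ : φ ∈ CliffordLevel n 2) : star φ ∈ CliffordLevel n 2 :=
  ⟨Unitary.star_mem hφ.1, fun P hP => by
    rw [star_star]
    exact star_mul_mul_mem_pauliGroup hφ hP⟩

theorem conj_mem_cliffordLevel (hφ : φ ∈ CliffordLevel n 2) (hU : U ∈ CliffordLevel n (j + 1)) :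
    φ * U * star φ ∈ CliffordLevel n (j + 1) := by
  induction j generalizing U with
  | zero => exact hφ.2 U hU
  | succ j ih =>
    refine ⟨mul_mem (mul_mem hφ.1 hU.1) (Unitary.star_mem hφ.1), fun P hP => ?_⟩
    have hconj := ih (hU.2 _ (star_mul_mul_mem_pauliGroup hφ hP))
    simpa only [star_mul, star_star, mul_assoc] using hconj

theorem mul_right_mem_cliffordLevel (hφ : φ ∈ CliffordLevel n 2)
    (hU : U ∈ CliffordLevel n (j + 2)) : U * φ ∈ CliffordLevel n (j + 2) :=
  ⟨mul_mem hU.1 hφ.1, fun P hP => by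
    simpa only [star_mul, mul_assoc] using hU.2 _ (hφ.2 P hP)⟩

theorem mul_left_mem_cliffordLevel (hφ : φ ∈ CliffordLevel n 2)
    (hU : U ∈ CliffordLevel n (j + 2)) : φ * U ∈ CliffordLevel n (j + 2) := by
  have hmul := mul_right_mem_cliffordLevel hφ (conj_mem_cliffordLevel hφ hU)
  rwa [mul_assoc, Matrix.mem_unitaryGroup_iff'.1 hφ.1, mul_one] at hmul

theorem map_conj_mem_pauliGroup {P : QMat n} (hP : P ∈ PauliGroup n) :
    (starRingEnd ℂ).mapMatrix P ∈ PauliGroup n := by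
  obtain ⟨c, u, q, hc, hq, rfl⟩ := mem_pauliGroup_iff.1 hP
  refine mem_pauliGroup_iff.2 ⟨star c, u, q, by rw [← star_pow, hc, star_one], hq, ?_⟩
  ext a b
  by_cases h : a = b + u
  · simpa [signedPerm, h] using .inl (star_signChar (q (b + u)))
  · simp [signedPerm, h]

theorem map_conj_mem_cliffordLevel (hU : U ∈ CliffordLevel n (j + 1)) :
    (starRingEnd ℂ).mapMatrix U ∈ CliffordLevel n (j + 1) := by
  induction j generalizing U with
  | zero => exact map_conj_mem_pauliGroup hU
  | succ j ih =>
    have hstar : star ((starRingEnd ℂ).mapMatrix U) = (starRingEnd ℂ).mapMatrix (star U) := rfl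
    refine ⟨?_, fun P hP => ?_⟩
    · rw [Matrix.mem_unitaryGroup_iff, hstar, ← map_mul, Matrix.mem_unitaryGroup_iff.1 hU.1,
        map_one]
    · have hPP : (starRingEnd ℂ).mapMatrix ((starRingEnd ℂ).mapMatrix P) = P := by ext; simp
      rw [hstar, ← hPP, ← map_mul, ← map_mul]
      exact ih (hU.2 _ (map_conj_mem_pauliGroup hP))

theorem IsDiagonal.star_eq_map_conj {d : QMat n} (hd : IsDiagonal n d) :
    star d = (starRingEnd ℂ).mapMatrix d := by
  ext a b
  by_cases hab : a = b
  · rw [hab]; rfl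
  · simp [Matrix.star_apply, hd a b hab, hd b a (Ne.symm hab)]

theorem IsSemiClifford.star_mem_cliffordLevel (hsc : IsSemiClifford n U)
    (hU : U ∈ CliffordLevel n (j + 2)) : star U ∈ CliffordLevel n (j + 2) := by
  obtain ⟨φ₁, d, φ₂, hφ₁, hφ₂, hd, rfl⟩ := hsc
  have hφ₁' := star_mem_cliffordLevel_two hφ₁
  have hφ₂' := star_mem_cliffordLevel_two hφ₂
  have hd_mem : d ∈ CliffordLevel n (j + 2) := by
    have hmem := mul_left_mem_cliffordLevel hφ₁' (mul_right_mem_cliffordLevel hφ₂' hU)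
    rwa [mul_assoc (φ₁ * d), Matrix.mem_unitaryGroup_iff.1 hφ₂.1, mul_one, ← mul_assoc,
      Matrix.mem_unitaryGroup_iff'.1 hφ₁.1, one_mul] at hmem
  have hd_star : star d ∈ CliffordLevel n (j + 2) := by
    rw [hd.star_eq_map_conj]
    exact map_conj_mem_cliffordLevel hd_mem
  rw [star_mul, star_mul]
  exact mul_left_mem_cliffordLevel hφ₂' (mul_right_mem_cliffordLevel hφ₁' hd_star)

end CliffordHierarchy

section PermutationGates

open scoped fwdDiff

variable {n j : ℕ}

theorem signedPerm_mem_cliffordLevel_two {π : Equiv.Perm (QV n)} {q : QV n → ZMod 2}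
    (hπ : HasDegreeLT 2 π) (hq : HasDegreeLT 3 q) : signedPerm π q ∈ CliffordLevel n 2 := by
  refine ⟨signedPerm_mem_unitaryGroup π q, fun P hP => ?_⟩
  obtain ⟨c, u, r, hc, hr, rfl⟩ := mem_pauliGroup_iff.1 hP
  have hconj : π * Equiv.addRight u * π⁻¹ = Equiv.addRight (π u - π 0) := by
    ext1 a
    simpa [add_sub_assoc] using hasDegreeLT_two_iff.1 hπ (π⁻¹ a) u
  rw [mul_smul_comm, smul_mul_assoc, signedPerm_conj, hconj]
  refine smul_mem_cliffordLevel hc (signedPerm_addRight_mem_pauliGroup _ ?_)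
  have hphase : (fun a => q a + r (π⁻¹ a) + q ((Equiv.addRight (π u - π 0))⁻¹ a)) =
      Δ_[-(π u - π 0)] q + r ∘ π.symm := by
    funext a
    simp only [fwdDiff, ZModModule.sub_eq_add, Pi.add_apply, Equiv.Perm.inv_def,
      Equiv.addRight_symm, Equiv.coe_addRight, Function.comp_apply]
    ring
  rw [hphase]
  exact (hq _).add (hr.comp_affine hπ.symm)

theorem permGate_mem_cliffordLevel_three {f : Equiv.Perm (QV n)}
    (hconj : ∀ u, HasDegreeLT 2 (f * Equiv.addRight u * f⁻¹ : Equiv.Perm (QV n)))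
    (hf : HasDegreeLT 3 f.symm) :
    permGate n f ∈ CliffordLevel n 3 := by
  rw [permGate_eq_signedPerm]
  refine ⟨signedPerm_mem_unitaryGroup f 0, fun P hP => ?_⟩
  obtain ⟨c, u, r, hc, hr, rfl⟩ := mem_pauliGroup_iff.1 hP
  rw [mul_smul_comm, smul_mul_assoc, signedPerm_conj]
  refine smul_mem_cliffordLevel hc (signedPerm_mem_cliffordLevel_two (hconj u) ?_)
  simpa [Function.comp_def] using hr.affine_comp hf

theorem HasDegreeLT.of_signedPerm_addRight_mem_pauliGroup {u : QV n} {q : QV n → ZMod 2}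
    (h : signedPerm (Equiv.addRight u) q ∈ PauliGroup n) : HasDegreeLT 2 q := by
  obtain ⟨c, w, r, -, hr, heq⟩ := mem_pauliGroup_iff.1 h
  have hphase (a : QV n) : signChar (q a - r a) = c := by
    have hentry := congrFun (congrFun heq a) (a - u)
    have hu : a = Equiv.addRight u (a - u) := (sub_add_cancel a u).symm
    simp only [signedPerm, Matrix.smul_apply, Matrix.of_apply, ← hu, if_true,
      smul_eq_mul] at hentry
    split_ifs at hentry
    · rw [AddChar.map_sub_eq_div, hentry, mul_div_cancel_right₀ c (signChar_ne_zero _)]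
    · exact absurd (hentry.trans (mul_zero c)) (signChar_ne_zero _)
  have hconst (a : QV n) : q a - r a = q 0 - r 0 :=
    signChar_injective ((hphase a).trans (hphase 0).symm)
  refine hasDegreeLT_two_iff.2 fun x y => ?_
  linear_combination hconst (x + y) - hconst x - hconst y + hasDegreeLT_two_iff.1 hr x y

theorem HasDegreeLT.of_signedPerm_addRight_mem_cliffordLevel {u : QV n} {q : QV n → ZMod 2}
    (h : signedPerm (Equiv.addRight u) q ∈ CliffordLevel n (j + 1)) : HasDegreeLT (j + 2) q := by
  induction j generalizing u q with
  | zero => exact .of_signedPerm_addRight_mem_pauliGroup h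
  | succ j ih =>
    intro s
    have hmem := h.2 _ (signedPerm_addRight_mem_pauliGroup (-s) (q := 0)
      (hasDegreeLT_two_iff.2 fun _ _ => by simp))
    have hconj : Equiv.addRight u * Equiv.addRight (-s) * (Equiv.addRight u)⁻¹ =
        Equiv.addRight (-s) := by
      rw [mul_inv_eq_iff_eq_mul]
      ext1 a
      exact add_right_comm a (-s) u
    rw [signedPerm_conj, hconj] at hmem
    convert ih hmem using 1
    funext a
    simp [fwdDiff, ZModModule.sub_eq_add, add_comm]

/-- Conjugating `Z^{eₘ}` by `U⁻¹` gives the diagonal gate whose phase function is the `m`-th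
coordinate of `f`. -/
theorem HasDegreeLT.of_inv_permGate_mem_cliffordLevel {f : Equiv.Perm (QV n)}
    (h : (permGate n f)⁻¹ ∈ CliffordLevel n (j + 2)) : HasDegreeLT (j + 2) f := by
  refine HasDegreeLT.pi (f := f) fun m => ?_
  rw [inv_permGate, star_permGate, permGate_eq_signedPerm] at h
  have hmem := h.2 _ (signedPerm_addRight_mem_pauliGroup 0 (q := fun a => a m)
    (hasDegreeLT_two_addMonoidHom (Pi.evalAddMonoidHom (fun _ : Fin n => ZMod 2) m)))
  rw [signedPerm_conj, Equiv.addRight_zero, mul_one, mul_inv_cancel, ← Equiv.addRight_zero] at hmem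
  simpa only [inv_inv, Pi.zero_apply, zero_add, add_zero] using
    HasDegreeLT.of_signedPerm_addRight_mem_cliffordLevel hmem

end PermutationGates

@[elab_as_elim]
theorem qv_induction {n : ℕ} {p : QV n → Prop} (v : QV n) (zero : p 0)
    (add : ∀ u w, p u → p w → p (u + w)) (basis : ∀ i, v i ≠ 0 → p (stdBasis n i)) : p v := by
  have hsum : v = ∑ i with v i ≠ 0, stdBasis n i := by
    funext m
    rcases zmod_two_eq_zero_or_one (v m) with hm | hm <;> simp [Finset.sum_apply, stdBasis, hm]
  rw [hsum]
  exact Finset.sum_induction _ p add zero fun i hi => basis i (Finset.mem_filter.1 hi).2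

/-- The space `𝔽₂ⁿ` regarded as a ring without unit under a descending multiplication. -/
def DescendingAlgebra {n : ℕ} {mul : QV n → QV n → QV n} (_ : IsDescendingMul n mul) : Type :=
  QV n

namespace IsDescendingMul

variable {n : ℕ} {mul : QV n → QV n → QV n} (h : IsDescendingMul n mul)

section
include h

protected theorem add_mul (u v w : QV n) : mul (u + v) w = mul u w + mul v w := h.1 u v w

protected theorem mul_add (u v w : QV n) : mul u (v + w) = mul u v + mul u w := h.2.1 u v w

protected theorem mul_assoc (u v w : QV n) : mul (mul u v) w = mul u (mul v w) := h.2.2.1 u v w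

protected theorem mul_comm (u v : QV n) : mul u v = mul v u := h.2.2.2.1 u v

theorem stdBasis_mul_self (i : Fin n) : mul (stdBasis n i) (stdBasis n i) = 0 := h.2.2.2.2.1 i

theorem stdBasis_mul_stdBasis_apply {i j m : Fin n} (hij : i < j) (hm : m ≤ j) :
    mul (stdBasis n i) (stdBasis n j) m = 0 := h.2.2.2.2.2 i j hij m hm

end

instance : AddCommGroup (DescendingAlgebra h) := inferInstanceAs (AddCommGroup (QV n))

instance : NonUnitalCommRing (DescendingAlgebra h) where
  mul := mul
  left_distrib := h.mul_add
  right_distrib := h.add_mul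
  zero_mul a := (AddMonoidHom.mk' (mul · a) fun u v => h.add_mul u v a).map_zero
  mul_zero a := (AddMonoidHom.mk' (mul a) (h.mul_add a)).map_zero
  mul_assoc := h.mul_assoc
  mul_comm := h.mul_comm

/-- The commutative ring obtained by adjoining a unit to `𝔽₂ⁿ`. In it the operation `u + v + uv`
becomes the product of `1 + u` and `1 + v`. -/
def UnitalRing : Type := Unitization ℤ (DescendingAlgebra h)

instance : CommRing h.UnitalRing := inferInstanceAs (CommRing (Unitization ℤ _))

/-- The embedding of `𝔽₂ⁿ` into its unital ring. -/
def inr : QV n →+ h.UnitalRing :=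
  AddMonoidHom.mk' (fun v : DescendingAlgebra h => Unitization.inr v) (Unitization.inr_add ℤ)

include h

theorem inr_injective : Function.Injective h.inr :=
  Unitization.inr_injective (A := DescendingAlgebra h)

theorem inr_mul (u v : QV n) : h.inr (mul u v) = h.inr u * h.inr v :=
  Unitization.inr_mul ℤ (A := DescendingAlgebra h) u v

protected theorem zero_mul (v : QV n) : mul 0 v = 0 := h.inr_injective (by simp [inr_mul])

protected theorem mul_zero (u : QV n) : mul u 0 = 0 := h.inr_injective (by simp [inr_mul])

protected theorem mul_self_eq_zero (v : QV n) : mul v v = 0 := by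
  induction v using qv_induction with
  | zero => exact h.zero_mul 0
  | add u w hu hw =>
    rw [h.add_mul, h.mul_add, h.mul_add, hu, hw, h.mul_comm w u, zero_add, add_zero,
      ZModModule.add_self]
  | basis i => exact h.stdBasis_mul_self i

theorem mul_apply_eq_zero (u : QV n) {w : QV n} {t m : Fin n} (hw : ∀ i < t, w i = 0)
    (hm : m ≤ t) : mul u w m = 0 := by
  refine qv_induction w ?_ (fun w₁ w₂ h₁ h₂ => ?_) fun j hj => ?_
  · rw [h.mul_zero, Pi.zero_apply]
  · rw [h.mul_add, Pi.add_apply, h₁, h₂, add_zero]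
  have hmj : m ≤ j := hm.trans (not_lt.1 fun hjt => hj (hw j hjt))
  refine qv_induction u ?_ (fun u₁ u₂ h₁ h₂ => ?_) fun i _ => ?_
  · rw [h.zero_mul, Pi.zero_apply]
  · rw [h.add_mul, Pi.add_apply, h₁, h₂, add_zero]
  rcases lt_trichotomy i j with hij | rfl | hji
  · exact h.stdBasis_mul_stdBasis_apply hij hmj
  · rw [h.mul_self_eq_zero, Pi.zero_apply]
  · rw [h.mul_comm]
    exact h.stdBasis_mul_stdBasis_apply hji (hmj.trans hji.le)

end IsDescendingMul

/-- The map `∑_{i ∈ S} eᵢ ↦ ∑_{∅ ≠ T ⊆ S} ∏_{i ∈ T} eᵢ` associated to a multiplication. -/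
def dmMap (n : ℕ) (mul : QV n → QV n → QV n) (v : QV n) : QV n :=
  ∑ T ∈ ({i | v i ≠ 0} : Finset (Fin n)).powerset.erase ∅, dmProd n mul T

theorem dmPiSpec_dmMap (n : ℕ) (mul : QV n → QV n → QV n) : dmPiSpec n mul (dmMap n mul) := by
  intro S
  have hsupp : ({i | (∑ j ∈ S, stdBasis n j) i ≠ 0} : Finset (Fin n)) = S := by
    ext i
    simp [stdBasis]
  rw [dmMap, hsupp]

namespace IsDescendingMul

variable {n : ℕ} {mul : QV n → QV n → QV n} (h : IsDescendingMul n mul)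
include h

theorem inr_dmProdList {l : List (Fin n)} (hl : l ≠ []) :
    h.inr (dmProdList n mul l) = (l.map fun i => h.inr (stdBasis n i)).prod := by
  induction l with
  | nil => exact absurd rfl hl
  | cons i l ih =>
    cases l with
    | nil => simp [dmProdList]
    | cons j l =>
      rw [dmProdList, h.inr_mul, ih (List.cons_ne_nil j l), List.map_cons (a := i),
        List.prod_cons]

theorem inr_dmProd {T : Finset (Fin n)} (hT : T ≠ ∅) :
    h.inr (dmProd n mul T) = ∏ i ∈ T, h.inr (stdBasis n i) := by
  have hperm : (T.sort (· ≤ ·)).Perm T.toList := Finset.sort_perm_toList T (· ≤ ·)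
  have hsort : T.sort (· ≤ ·) ≠ [] := fun hnil =>
    hT (Finset.toList_eq_nil.1 (List.nil_perm.1 (hnil ▸ hperm)))
  rw [dmProd, h.inr_dmProdList hsort, (hperm.map _).prod_eq, Finset.prod_map_toList]

theorem one_add_inr_dmMap (v : QV n) :
    1 + h.inr (dmMap n mul v) = ∏ i, (1 + h.inr (v i • stdBasis n i)) := by
  have hfactor (i : Fin n) : 1 + h.inr (v i • stdBasis n i) =
      if v i ≠ 0 then 1 + h.inr (stdBasis n i) else 1 := by
    rcases zmod_two_eq_zero_or_one (v i) with hv | hv <;> simp [hv]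
  simp only [hfactor]
  rw [← Finset.prod_filter, Finset.prod_one_add, dmMap, map_sum,
    ← Finset.add_sum_erase _ _ (Finset.empty_mem_powerset _), Finset.prod_empty]
  exact congrArg _ (Finset.sum_congr rfl fun T hT => h.inr_dmProd (Finset.ne_of_mem_erase hT))

theorem dmMap_zero : dmMap n mul 0 = 0 :=
  h.inr_injective (by simpa using h.one_add_inr_dmMap 0)

theorem dmMap_add (u v : QV n) :
    dmMap n mul (u + v) = dmMap n mul u + dmMap n mul v + mul (dmMap n mul u) (dmMap n mul v) := by
  have hprod : 1 + h.inr (dmMap n mul (u + v)) =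
      (1 + h.inr (dmMap n mul u)) * (1 + h.inr (dmMap n mul v)) := by
    simp only [one_add_inr_dmMap, ← Finset.prod_mul_distrib]
    refine Finset.prod_congr rfl fun i _ => ?_
    have hmul : h.inr (u i • stdBasis n i) * h.inr (v i • stdBasis n i) = 0 := by
      rcases zmod_two_eq_zero_or_one (u i) with hu | hu <;>
        rcases zmod_two_eq_zero_or_one (v i) with hv | hv <;>
        simp [hu, hv, ← h.inr_mul, h.mul_self_eq_zero]
    rw [Pi.add_apply, add_smul, map_add]
    linear_combination -hmul
  apply h.inr_injective
  rw [map_add, map_add, h.inr_mul]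
  linear_combination hprod

theorem dmMap_stdBasis (i : Fin n) : dmMap n mul (stdBasis n i) = stdBasis n i := by
  apply h.inr_injective
  have hprod := h.one_add_inr_dmMap (stdBasis n i)
  rw [Finset.prod_eq_single i] at hprod
  · simpa [stdBasis] using hprod
  · intro j _ hj
    simp [stdBasis, hj]
  · simp

theorem dmMap_apply_of_forall_lt {v : QV n} {p : Fin n} (hv : ∀ i < p, v i = 0) :
    dmMap n mul v p = v p := by
  suffices hvanish : (∀ i < p, dmMap n mul v i = 0) ∧ dmMap n mul v p = v p from hvanish.2
  refine qv_induction v ?_ (fun u w hu hw => ?_) fun i hi => ?_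
  · simp [h.dmMap_zero]
  · have hmul (m : Fin n) (hm : m ≤ p) : mul (dmMap n mul u) (dmMap n mul w) m = 0 :=
      h.mul_apply_eq_zero _ hw.1 hm
    constructor
    · intro m hm
      simp [h.dmMap_add, hu.1 m hm, hw.1 m hm, hmul m hm.le]
    · simp [h.dmMap_add, hu.2, hw.2, hmul p le_rfl]
  · have hpi : p ≤ i := not_lt.1 fun hip => hi (hv i hip)
    rw [h.dmMap_stdBasis]
    exact ⟨fun m hm => if_neg (hm.trans_le hpi).ne, rfl⟩

theorem eq_zero_of_dmMap_eq_zero {v : QV n} (hv : dmMap n mul v = 0) : v = 0 := by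
  funext i
  induction i using WellFoundedLT.induction with
  | ind i ih => rw [← h.dmMap_apply_of_forall_lt ih, hv, Pi.zero_apply]

theorem dmMap_injective : Function.Injective (dmMap n mul) := fun u v huv => by
  have hadd : dmMap n mul (u + v) = 0 := by
    rw [h.dmMap_add, huv, ZModModule.add_self, h.mul_self_eq_zero, add_zero]
  rw [← sub_eq_zero, ZModModule.sub_eq_add, h.eq_zero_of_dmMap_eq_zero hadd]

/-- The permutation of `𝔽₂ⁿ` given by `dmMap`. -/
noncomputable def perm : Equiv.Perm (QV n) :=
  Equiv.ofBijective _ (Finite.injective_iff_bijective.1 h.dmMap_injective)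

theorem coe_perm : ⇑h.perm = dmMap n mul := rfl

theorem perm_add (u v : QV n) :
    h.perm (u + v) = h.perm u + h.perm v + mul (h.perm u) (h.perm v) :=
  h.dmMap_add u v

theorem perm_symm_add_add_mul (a b : QV n) :
    h.perm.symm (a + b + mul a b) = h.perm.symm a + h.perm.symm b := by
  rw [Equiv.symm_apply_eq, h.perm_add, Equiv.apply_symm_apply, Equiv.apply_symm_apply]

theorem perm_symm_add (a b : QV n) :
    h.perm.symm (a + b) = h.perm.symm a + h.perm.symm b - h.perm.symm (mul a b) := by
  have hcirc : (a + b) + mul a b + mul (a + b) (mul a b) = a + b + mul a b := by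
    have hsq : mul (a + b) (mul a b) = 0 := by
      apply h.inr_injective
      have ha := congrArg h.inr (h.mul_self_eq_zero a)
      have hb := congrArg h.inr (h.mul_self_eq_zero b)
      simp only [h.inr_mul, map_add, map_zero] at ha hb ⊢
      linear_combination h.inr b * ha + h.inr a * hb
    rw [hsq, add_zero]
  rw [eq_sub_iff_add_eq, ← h.perm_symm_add_add_mul, ← h.perm_symm_add_add_mul, hcirc]

theorem perm_symm_add_mul (x y s : QV n) :
    h.perm.symm (mul (x + y) s) = h.perm.symm (mul x s) + h.perm.symm (mul y s) := by
  have hzero : mul (mul x s) (mul y s) = 0 := by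
    apply h.inr_injective
    have hs := congrArg h.inr (h.mul_self_eq_zero s)
    simp only [h.inr_mul, map_zero] at hs ⊢
    linear_combination h.inr x * h.inr y * hs
  rw [← h.perm_symm_add_add_mul, hzero, add_zero, h.add_mul]

theorem hasDegreeLT_perm_symm : HasDegreeLT 3 h.perm.symm := fun s => by
  have hzero : h.perm.symm 0 = 0 := h.perm.symm_apply_eq.2 h.dmMap_zero.symm
  refine hasDegreeLT_two_iff.2 fun x y => ?_
  simp only [fwdDiff, h.perm_symm_add _ s, h.perm_symm_add_mul, h.zero_mul, hzero]
  abel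

theorem hasDegreeLT_conj_perm (u : QV n) :
    HasDegreeLT 2 (h.perm * Equiv.addRight u * h.perm⁻¹ : Equiv.Perm (QV n)) := by
  have hconj (v : QV n) :
      (h.perm * Equiv.addRight u * h.perm⁻¹) v = v + h.perm u + mul v (h.perm u) := by
    simp [h.perm_add]
  refine hasDegreeLT_two_iff.2 fun x y => ?_
  simp only [hconj, h.add_mul, h.zero_mul]
  abel

theorem permGate_perm_mem_cliffordLevel_three : permGate n h.perm ∈ CliffordLevel n 3 :=
  permGate_mem_cliffordLevel_three h.hasDegreeLT_conj_perm h.hasDegreeLT_perm_symm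

open scoped fwdDiff in
theorem fwdDiff_add_mul_perm (a s : QV n) :
    Δ_[s] (fun x => a + mul a (h.perm x)) =
      fun x => mul a (h.perm s) + mul (mul a (h.perm s)) (h.perm x) := by
  funext x
  apply h.inr_injective
  simp only [fwdDiff, h.perm_add, map_sub, map_add, h.inr_mul]
  ring

theorem foldl_mul_eq_zero {a : QV n} {l : List (QV n)}
    (ha : HasDegreeLT l.length fun x => a + mul a (h.perm x)) : l.foldl mul a = 0 := by
  induction l generalizing a with
  | nil => simpa [h.coe_perm, h.dmMap_zero, h.mul_zero] using congrFun ha 0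
  | cons b l ih =>
    have hb := ha (h.perm.symm b)
    rw [h.fwdDiff_add_mul_perm, Equiv.apply_symm_apply] at hb
    exact ih hb

/-- A finite difference of `perm` in the direction `perm⁻¹ a` is `x ↦ a + a · perm x`, so the degree
of `perm` bounds the length of the nonvanishing products. -/
theorem foldl_mul_eq_zero_of_hasDegreeLT_perm {a : QV n} {l : List (QV n)}
    (hdeg : HasDegreeLT (l.length + 1) h.perm) : l.foldl mul a = 0 := by
  refine h.foldl_mul_eq_zero ?_
  convert hdeg (h.perm.symm a) using 1
  funext x
  rw [fwdDiff, h.perm_add, Equiv.apply_symm_apply, h.mul_comm (h.perm x)]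
  abel

theorem inv_permGate_perm_notMem_cliffordLevel {j : ℕ} {a : QV n} {l : List (QV n)}
    (hl : l.length = j + 1) (hne : l.foldl mul a ≠ 0) :
    (permGate n h.perm)⁻¹ ∉ CliffordLevel n (j + 2) := fun hmem => by
  have hdeg : HasDegreeLT (l.length + 1) h.perm := hl ▸ .of_inv_permGate_mem_cliffordLevel hmem
  exact hne (h.foldl_mul_eq_zero_of_hasDegreeLT_perm hdeg)

end IsDescendingMul

section SubsetGates

/-- The basis vector `e_S` of `𝔽₂^(2^k-1)`, for the subset `S ⊆ [k]` with bitmask `x`; it is `0`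
when `x` is not the mask of a nonempty subset of `[k]`. -/
def maskBasis (k x : ℕ) : QV (2 ^ k - 1) := fun m => if m.val + 1 = x then 1 else 0

variable (k : ℕ)

theorem maskBasis_ne_zero {x : ℕ} (hx : x ≠ 0) (hxk : x < 2 ^ k) : maskBasis k x ≠ 0 := fun h => by
  have hm := congrFun h ⟨x - 1, by omega⟩
  simp [maskBasis, Nat.sub_add_cancel (Nat.one_le_iff_ne_zero.2 hx)] at hm

theorem maskBasis_eq_zero {x : ℕ} (hxk : 2 ^ k ≤ x) : maskBasis k x = 0 :=
  funext fun m => if_neg (by omega)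

theorem maskBasis_succ (a : Fin (2 ^ k - 1)) : maskBasis k (a + 1) = stdBasis _ a := by
  funext m
  simp [maskBasis, stdBasis, Fin.ext_iff]

theorem ukBasisMul_eq (a b : Fin (2 ^ k - 1)) :
    ukBasisMul k a b = if (a.val + 1) &&& (b.val + 1) = 0 then maskBasis k (a + 1 + (b + 1))
      else 0 := by
  rw [ukBasisMul]
  congr 1
  split_ifs with hab
  · rw [← maskBasis_succ, add_add_add_comm, add_assoc _ 1 1]
  · exact (maskBasis_eq_zero k (by omega)).symm

theorem ukMul_stdBasis (a b : Fin (2 ^ k - 1)) :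
    ukMul k (stdBasis _ a) (stdBasis _ b) = ukBasisMul k a b := by
  rw [ukMul, Finset.sum_eq_single a, Finset.sum_eq_single b] <;> simp +contextual [stdBasis]

theorem ukMul_add (u v w : QV (2 ^ k - 1)) : ukMul k u (v + w) = ukMul k u v + ukMul k u w := by
  simp only [ukMul, Pi.add_apply, mul_add, add_smul, Finset.sum_add_distrib]

theorem ukMul_comm (u v : QV (2 ^ k - 1)) : ukMul k u v = ukMul k v u := by
  rw [ukMul, ukMul, Finset.sum_comm]
  simp only [ukBasisMul_eq, mul_comm (u _), Nat.land_comm, add_comm]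

theorem add_ukMul (u v w : QV (2 ^ k - 1)) : ukMul k (u + v) w = ukMul k u w + ukMul k v w := by
  simp only [ukMul_comm k _ w, ukMul_add]

theorem ukMul_zero (u : QV (2 ^ k - 1)) : ukMul k u 0 = 0 := by simp [ukMul]

theorem zero_ukMul (u : QV (2 ^ k - 1)) : ukMul k 0 u = 0 := by simp [ukMul]

theorem ukMul_maskBasis {x y : ℕ} (hx : x ≠ 0) (hy : y ≠ 0) :
    ukMul k (maskBasis k x) (maskBasis k y) = if x &&& y = 0 then maskBasis k (x + y) else 0 := by
  by_cases hxk : x < 2 ^ k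
  · by_cases hyk : y < 2 ^ k
    · obtain ⟨a, rfl⟩ : ∃ a : Fin (2 ^ k - 1), x = a + 1 := ⟨⟨x - 1, by omega⟩, by simp; omega⟩
      obtain ⟨b, rfl⟩ : ∃ b : Fin (2 ^ k - 1), y = b + 1 := ⟨⟨y - 1, by omega⟩, by simp; omega⟩
      rw [maskBasis_succ, maskBasis_succ, ukMul_stdBasis, ukBasisMul_eq]
    · rw [maskBasis_eq_zero k (not_lt.1 hyk), ukMul_zero, maskBasis_eq_zero k (by omega), ite_self]
  · rw [maskBasis_eq_zero k (not_lt.1 hxk), zero_ukMul, maskBasis_eq_zero k (by omega), ite_self]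

theorem add_eq_or_of_and_eq_zero {x y : ℕ} (h : x &&& y = 0) : x + y = x ||| y := by
  have hlt : x + y < 2 ^ (x + y) := Nat.lt_two_pow_self
  have hbv := congrArg BitVec.toNat (BitVec.add_eq_or_of_and_eq_zero
    (BitVec.ofNat (x + y) x) (BitVec.ofNat (x + y) y) (by rw [← BitVec.ofNat_and, h]))
  simpa [Nat.mod_eq_of_lt hlt, Nat.mod_eq_of_lt ((Nat.le_add_right x y).trans_lt hlt),
    Nat.mod_eq_of_lt ((Nat.le_add_left y x).trans_lt hlt)] using hbv

/-- The right-hand side is symmetric in `x`, `y`, `z`, which gives associativity. -/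
theorem ukMul_ukMul_maskBasis {x y z : ℕ} (hx : x ≠ 0) (hy : y ≠ 0) (hz : z ≠ 0) :
    ukMul k (ukMul k (maskBasis k x) (maskBasis k y)) (maskBasis k z) =
      if x &&& y = 0 ∧ x &&& z = 0 ∧ y &&& z = 0 then maskBasis k (x + y + z) else 0 := by
  rw [ukMul_maskBasis k hx hy]
  by_cases hxy : x &&& y = 0
  · have hdisj : (x + y) &&& z = 0 ↔ x &&& z = 0 ∧ y &&& z = 0 := by
      rw [add_eq_or_of_and_eq_zero hxy, Nat.and_or_distrib_right, Nat.or_eq_zero_iff]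
    rw [if_pos hxy, ukMul_maskBasis k (by omega) hz]
    simp only [hdisj, hxy, true_and]
  · rw [if_neg hxy, zero_ukMul, if_neg fun hdisj => hxy hdisj.1]

theorem ukMul_assoc (u v w : QV (2 ^ k - 1)) :
    ukMul k (ukMul k u v) w = ukMul k u (ukMul k v w) := by
  refine qv_induction u (by simp only [zero_ukMul]) (by simp +contextual [add_ukMul]) fun a _ => ?_
  refine qv_induction v (by simp only [zero_ukMul, ukMul_zero])
    (by simp +contextual [add_ukMul, ukMul_add]) fun b _ => ?_
  refine qv_induction w (by simp only [ukMul_zero]) (by simp +contextual [ukMul_add]) fun c _ => ?_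
  rw [ukMul_comm k (stdBasis _ a) (ukMul k _ _)]
  simp only [← maskBasis_succ, ukMul_ukMul_maskBasis k (Nat.succ_ne_zero _) (Nat.succ_ne_zero _)
    (Nat.succ_ne_zero _)]
  rw [Nat.land_comm (b + 1) (a + 1), Nat.land_comm (c + 1) (a + 1)]
  congr 1
  · exact propext (by tauto)
  · congr 1
    ring

theorem isDescendingMul_ukMul : IsDescendingMul (2 ^ k - 1) (ukMul k) := by
  refine ⟨add_ukMul k, ukMul_add k, ukMul_assoc k, ukMul_comm k, fun i => ?_, fun i j _ m hm => ?_⟩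
  · rw [ukMul_stdBasis, ukBasisMul_eq, if_neg (by simp)]
  · rw [ukMul_stdBasis, ukBasisMul_eq]
    split_ifs
    · exact if_neg (by have := Fin.le_def.1 hm; omega)
    · rfl

theorem foldl_ukMul_singletons (j : ℕ) :
    ((List.range j).map fun i => maskBasis k (2 ^ (i + 1))).foldl (ukMul k) (maskBasis k 1) =
      maskBasis k (2 ^ (j + 1) - 1) := by
  induction j with
  | zero => rfl
  | succ j ih =>
    have hlt : 1 < 2 ^ (j + 1) := Nat.one_lt_two_pow (Nat.succ_ne_zero j)
    have hdisj : (2 ^ (j + 1) - 1) &&& 2 ^ (j + 1) = 0 := by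
      rw [Nat.land_comm, Nat.and_two_pow_sub_one_eq_mod, Nat.mod_self]
    rw [List.range_succ, List.map_append, List.foldl_append, ih, List.map_singleton,
      List.foldl_cons, List.foldl_nil, ukMul_maskBasis k (by omega) (by omega), if_pos hdisj]
    congr 1
    rw [pow_succ' 2 (j + 1)]
    omega

theorem inv_permGate_ukMul_notMem_cliffordLevel {j : ℕ} (hjk : j + 2 ≤ k) :
    (permGate (2 ^ k - 1) (isDescendingMul_ukMul k).perm)⁻¹ ∉ CliffordLevel _ (j + 2) := by
  have hle : 2 ^ (j + 2) ≤ 2 ^ k := Nat.pow_le_pow_right two_pos hjk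
  have hlt : 1 < 2 ^ (j + 2) := Nat.one_lt_two_pow (by omega)
  have hne : maskBasis k (2 ^ (j + 2) - 1) ≠ 0 := maskBasis_ne_zero k (by omega) (by omega)
  rw [← foldl_ukMul_singletons k (j + 1)] at hne
  exact (isDescendingMul_ukMul k).inv_permGate_perm_notMem_cliffordLevel (by simp) hne

end SubsetGates

/-- For every `k ≥ 3`, the permutation gate `U_k` on `n = 2ᵏ−1` qubits
lies in `𝒞₃`, but `U_k⁻¹ ∉ 𝒞ₖ`; consequently `U_k` is not semi-Clifford. -/
theorem stmt5 (k : ℕ) (hk : 3 ≤ k) :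
    ∃ f : QV (2 ^ k - 1) ≃ QV (2 ^ k - 1),
      dmPiSpec (2 ^ k - 1) (ukMul k) ⇑f ∧
      permGate (2 ^ k - 1) f ∈ CliffordLevel (2 ^ k - 1) 3 ∧
      (permGate (2 ^ k - 1) f)⁻¹ ∉ CliffordLevel (2 ^ k - 1) k ∧
      ¬ IsSemiClifford (2 ^ k - 1) (permGate (2 ^ k - 1) f) := by
  have hmul := isDescendingMul_ukMul k
  have hmem := hmul.permGate_perm_mem_cliffordLevel_three
  refine ⟨hmul.perm, dmPiSpec_dmMap _ _, hmem, ?_, fun hsc => ?_⟩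
  · obtain ⟨j, rfl⟩ := Nat.exists_eq_add_of_le' (show 2 ≤ k by omega)
    exact inv_permGate_ukMul_notMem_cliffordLevel _ le_rfl
  · have hinv := hsc.star_mem_cliffordLevel hmem
    rw [← inv_permGate] at hinv
    exact inv_permGate_ukMul_notMem_cliffordLevel k hk hinv
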